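/- arXiv:0906.1546 — 3 statements merged into one kernel-verified Lean document; each statement's English description precedes it below -/
import Mathlib

section
/- Fix real numbers a, b and consider the real function y ↦ F(a, b, a, a, y) (i.e. with x = X = a). Its derivative at y = 1 equals 2(a⁴ + S₂a² + S₄)²(1 − b²)(1 − a²) = 2·(4a²(1 − a)(b − a))²·(1 − b²)(1 − a²), where S₂, S₄ are evaluated at (x, X, y) = (a, a, 1). In particular, if 0 < a < 1 < b this derivative is strictly negative, hence nonzero. -/
/-!
At `x = X = a` the factor `a² - x²` kills the first term of `F`, while the inner factor of the
second term splits as `a⁴ + S₂ a² + S₄ = 4a²(y - a)(b - a)`. So `F` restricts to a polynomial in `y`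
with the factor `1 - y²`, which vanishes at `y = 1` with derivative `-2`; only that factor
contributes to the derivative there.
-/

/-- S₂ as a function of the parameters b, x, y, X. -/
noncomputable def S₂ (b x y X : ℝ) : ℝ :=
  b * y - b * x - x * y + 2 * (x - b - y) * X + X ^ 2

/-- S₄ as a function of the parameters b, x, y, X. -/
noncomputable def S₄ (b x y X : ℝ) : ℝ :=
  2 * b * x * y * X + (b * y - b * x - x * y) * X ^ 2

/-- The function F whose zero set solves the residue problem. -/
noncomputable def F (a b x X y : ℝ) : ℝ :=
  (1 + S₂ b x y X + S₄ b x y X) ^ 2 * (a ^ 2 - x ^ 2) * (a ^ 2 - b ^ 2) * (a ^ 2 - y ^ 2)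
    - (a ^ 4 + S₂ b x y X * a ^ 2 + S₄ b x y X) ^ 2 * (1 - y ^ 2) * (1 - b ^ 2) * (1 - x ^ 2)

theorem inner_factor_eq (a b y : ℝ) :
    a ^ 4 + S₂ b a y a * a ^ 2 + S₄ b a y a = 4 * a ^ 2 * (y - a) * (b - a) := by
  unfold S₂ S₄
  ring

theorem hasDerivAt_F_at_one (a b : ℝ) :
    HasDerivAt (fun y => F a b a a y)
      (2 * (4 * a ^ 2 * (1 - a) * (b - a)) ^ 2 * ((1 - b ^ 2) * (1 - a ^ 2))) 1 := by
  have hF : (fun y => F a b a a y) = fun y =>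
      -((4 * a ^ 2 * (b - a)) ^ 2 * (1 - b ^ 2) * (1 - a ^ 2)) *
        ((y - a) ^ 2 * (1 - y ^ 2)) := by
    funext y
    rw [F, inner_factor_eq]
    ring
  rw [hF]
  have h := ((((hasDerivAt_id (1 : ℝ)).sub_const a).pow 2).mul
    (((hasDerivAt_id (1 : ℝ)).pow 2).const_sub 1)).const_mul
      (-((4 * a ^ 2 * (b - a)) ^ 2 * (1 - b ^ 2) * (1 - a ^ 2)))
  refine h.congr_deriv ?_
  simp only [id]
  norm_num
  ring

/-- The derivative of y ↦ F(a, b, a, a, y) at y = 1 equals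
2(a⁴ + S₂a² + S₄)²(1 − b²)(1 − a²) = 2·(4a²(1 − a)(b − a))²·(1 − b²)(1 − a²),
where S₂, S₄ are evaluated at (x, X, y) = (a, a, 1). In particular, if 0 < a < 1 < b this
derivative is strictly negative. -/
theorem deriv_F_at_one (a b : ℝ) :
    deriv (fun y => F a b a a y) 1
      = 2 * (a ^ 4 + S₂ b a 1 a * a ^ 2 + S₄ b a 1 a) ^ 2 * (1 - b ^ 2) * (1 - a ^ 2)
    ∧ 2 * (a ^ 4 + S₂ b a 1 a * a ^ 2 + S₄ b a 1 a) ^ 2 * (1 - b ^ 2) * (1 - a ^ 2)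
      = 2 * (4 * a ^ 2 * (1 - a) * (b - a)) ^ 2 * ((1 - b ^ 2) * (1 - a ^ 2))
    ∧ (0 < a → a < 1 → 1 < b → deriv (fun y => F a b a a y) 1 < 0) := by
  have hd := (hasDerivAt_F_at_one a b).deriv
  rw [inner_factor_eq]
  refine ⟨by rw [hd]; ring, by ring, fun h0 h1 hb => ?_⟩
  rw [hd]
  have hsq : 0 < 2 * (4 * a ^ 2 * (1 - a) * (b - a)) ^ 2 := by
    have h1a : 0 < 1 - a := by linarith
    have hba : 0 < b - a := by linarith
    positivity
  exact mul_neg_of_pos_of_neg hsq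
    (mul_neg_of_neg_of_pos (by nlinarith) (by nlinarith))
end

section
/- For each pair of real numbers (a, b) with 0 < a < 1 < b, there exist ε > 0, δ > 0 and a continuously differentiable function φ defined on the square (a − ε, a + ε) × (a − ε, a + ε) with values in (1 − δ, 1 + δ), such that φ(a, a) = 1, F(a, b, x, X, φ(x, X)) = 0 for all (x, X) in the square, and moreover φ is locally unique: for every (x, X) in the square and every Y ∈ (1 − δ, 1 + δ), F(a, b, x, X, Y) = 0 if and only if Y = φ(x, X). -/
open Filter Topology

lemma hasDerivAt_F_slice (a b : ℝ) :
    HasDerivAt (fun y => F a b a a y)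
      (2 * (4 * a ^ 2 * (1 - a) * (b - a)) ^ 2 * (1 - b ^ 2) * (1 - a ^ 2)) 1 := by
  set P : ℝ → ℝ := fun y =>
    -((a ^ 4 + S₂ b a y a * a ^ 2 + S₄ b a y a) ^ 2 * (1 + y) * (1 - b ^ 2) * (1 - a ^ 2)) with hP
  have hdiff : DifferentiableAt ℝ P 1 := by
    simp only [hP, S₂, S₄]
    fun_prop
  have h := hdiff.hasDerivAt.mul ((hasDerivAt_id (1 : ℝ)).const_sub 1)
  have hfun : (fun y => F a b a a y) = P * fun y => 1 - id y := by
    funext y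
    simp only [F, hP, Pi.mul_apply, id]
    ring
  rw [hfun]
  refine h.congr_deriv ?_
  simp only [hP, S₂, S₄, id]
  ring

lemma deriv_value_ne_zero {a b : ℝ} (ha0 : 0 < a) (ha1 : a < 1) (hb : 1 < b) :
    2 * (4 * a ^ 2 * (1 - a) * (b - a)) ^ 2 * (1 - b ^ 2) * (1 - a ^ 2) ≠ 0 := by
  have h1 : 1 - a ≠ 0 := by linarith
  have h2 : b - a ≠ 0 := by linarith
  have h3 : 1 - b ^ 2 ≠ 0 := by nlinarith
  have h4 : 1 - a ^ 2 ≠ 0 := by nlinarith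
  have h5 : a ≠ 0 := ha0.ne'
  positivity

lemma contDiff_F (a b : ℝ) :
    ContDiff ℝ 1 (fun v : (ℝ × ℝ) × ℝ => F a b v.1.1 v.1.2 v.2) := by
  simp only [F, S₂, S₄]
  fun_prop

/-- For each pair (a, b) with 0 < a < 1 < b, the implicit function theorem applied to F at
(x, X, y) = (a, a, 1) yields ε > 0, δ > 0 and a C¹ function φ on
(a − ε, a + ε) × (a − ε, a + ε) with values in (1 − δ, 1 + δ) such that φ(a, a) = 1,
F(a, b, x, X, φ(x, X)) = 0 on the square, and φ is locally unique there. -/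
theorem implicit_function_y (a b : ℝ) (ha0 : 0 < a) (ha1 : a < 1) (hb : 1 < b) :
    ∃ ε > (0:ℝ), ∃ δ > (0:ℝ), ∃ φ : ℝ × ℝ → ℝ,
      ContDiffOn ℝ 1 φ (Set.Ioo (a - ε) (a + ε) ×ˢ Set.Ioo (a - ε) (a + ε))
      ∧ φ (a, a) = 1
      ∧ ∀ x X : ℝ, x ∈ Set.Ioo (a - ε) (a + ε) → X ∈ Set.Ioo (a - ε) (a + ε) →
          φ (x, X) ∈ Set.Ioo (1 - δ) (1 + δ)
          ∧ F a b x X (φ (x, X)) = 0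
          ∧ ∀ Y ∈ Set.Ioo (1 - δ) (1 + δ), (F a b x X Y = 0 ↔ Y = φ (x, X)) := by
  set G : (ℝ × ℝ) × ℝ → ℝ := fun v => F a b v.1.1 v.1.2 v.2 with hG
  set u : (ℝ × ℝ) × ℝ := ((a, a), 1) with hu
  have cdf : ContDiffAt ℝ 1 G u := (contDiff_F a b).contDiffAt
  have hGu : G u = 0 := by
    simp only [hG, hu, F]
    ring
  set D : ℝ := 2 * (4 * a ^ 2 * (1 - a) * (b - a)) ^ 2 * (1 - b ^ 2) * (1 - a ^ 2) with hD
  have hD0 : D ≠ 0 := deriv_value_ne_zero ha0 ha1 hb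
  -- The partial derivative along the last factor is multiplication by the slice derivative `D`.
  have hpart : fderiv ℝ G u ∘L .inr ℝ (ℝ × ℝ) ℝ =
      (ContinuousLinearEquiv.unitsEquivAut ℝ (Units.mk0 D hD0) : ℝ →L[ℝ] ℝ) := by
    have h1 : HasFDerivAt (fun y : ℝ => G ((a, a), y))
        (fderiv ℝ G u ∘L .inr ℝ (ℝ × ℝ) ℝ) 1 :=
      (cdf.differentiableAt one_ne_zero).hasFDerivAt.comp (1 : ℝ)
        (hasFDerivAt_prodMk_right (a, a) (1 : ℝ))
    rw [h1.unique (hasDerivAt_F_slice a b).hasFDerivAt]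
    ext
    simp [hD]
  have if₂ : (fderiv ℝ G u ∘L .inr ℝ (ℝ × ℝ) ℝ).IsInvertible := ⟨_, hpart.symm⟩
  set φ : ℝ × ℝ → ℝ := cdf.implicitFunction one_ne_zero if₂
  have hφa : φ (a, a) = 1 := cdf.implicitFunction_apply_self one_ne_zero if₂
  have hφC : ContDiffAt ℝ 1 φ (a, a) := cdf.contDiffAt_implicitFunction one_ne_zero if₂
  have hzero : ∀ᶠ p in 𝓝 (a, a), G (p, φ p) = G u :=
    cdf.eventually_apply_implicitFunction one_ne_zero if₂
  have hiff : ∀ᶠ v in 𝓝 u, G v = G u ↔ φ v.1 = v.2 :=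
    cdf.eventually_apply_eq_iff_implicitFunction one_ne_zero if₂
  obtain ⟨δ, hδ, hball⟩ := Metric.eventually_nhds_iff_ball.1 hiff
  have hφδ : ∀ᶠ p in 𝓝 (a, a), φ p ∈ Set.Ioo (1 - δ) (1 + δ) :=
    hφC.continuousAt.eventually_mem
      (hφa.symm ▸ Ioo_mem_nhds (by linarith) (by linarith))
  obtain ⟨ε₁, hε₁, hgood⟩ := Metric.eventually_nhds_iff_ball.1
    (((hφC.eventually (by simp)).and hzero).and hφδ)
  -- `ε ≤ δ` keeps the square inside the base of the `δ`-box around `u`.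
  have hsq : ∀ x X : ℝ, x ∈ Set.Ioo (a - min ε₁ δ) (a + min ε₁ δ) →
      X ∈ Set.Ioo (a - min ε₁ δ) (a + min ε₁ δ) →
      ((x, X) : ℝ × ℝ) ∈ Metric.ball (a, a) (min ε₁ δ) := by
    intro x X hx hX
    rw [← ball_prod_same, Real.ball_eq_Ioo]
    exact ⟨hx, hX⟩
  refine ⟨min ε₁ δ, lt_min hε₁ hδ, δ, hδ, φ, ?_, hφa, ?_⟩
  · rintro ⟨x, X⟩ ⟨hx, hX⟩
    exact (hgood _ (Metric.ball_subset_ball (min_le_left _ _) (hsq x X hx hX))).1.1.contDiffWithinAt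
  · intro x X hx hX
    obtain ⟨⟨-, h0⟩, hmem⟩ :=
      hgood _ (Metric.ball_subset_ball (min_le_left _ _) (hsq x X hx hX))
    refine ⟨hmem, h0.trans hGu, fun Y hY => ?_⟩
    have hv : (((x, X), Y) : (ℝ × ℝ) × ℝ) ∈ Metric.ball u δ := by
      rw [hu, ← ball_prod_same]
      exact ⟨Metric.ball_subset_ball (min_le_right _ _) (hsq x X hx hX),
        by rwa [Real.ball_eq_Ioo]⟩
    have := hball _ hv
    rw [hGu] at this
    exact this.trans eq_comm
end

section
/- Let a, b, x, y be real numbers with 0 < x < a < 1 < y < b, let X be any real number, and let wₐ be a complex number with wₐ² = (b + a)(x − a)(y + a) / ((b − a)(x + a)(y − a)) and Im wₐ < 0. Then 2πi · (a⁴ + S₂a² + S₄) / ( 2(a − b)(a − y)(a + x)(a² − 1)·wₐ ) = π(a⁴ + S₂a² + S₄) / ( (1 − a²)·√((b² − a²)(a² − x²)(y² − a²)) ), where the right-hand side is a real number (the square root being the positive real square root of the positive quantity (b² − a²)(a² − x²)(y² − a²)). -/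
/-!
The residue formula is a determination of the branch of a square root. Put
`q = (b - a) (x + a) (y - a) > 0` and `R = (b² - a²) (a² - x²) (y² - a²) > 0`. The equation for
`wₐ²` says `(q wₐ)² = -R`, so `q wₐ = ± i √R`, and `Im wₐ < 0` selects `q wₐ = -i √R`. The
denominator on the left is `2 (a² - 1) q wₐ = 2 i (1 - a²) √R`, which gives the right-hand side.
-/

open Complex Real

/-- The root of `w² = -r²`, `r > 0`, in the lower half plane is `-i r`. -/
theorem eq_neg_I_mul_of_sq_eq {w : ℂ} {r : ℝ} (hr : 0 < r)
    (hw : w ^ 2 = -(r : ℂ) ^ 2) (him : w.im < 0) : w = -(I * r) := by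
  have h : w ^ 2 = (I * r) ^ 2 := by rw [hw, mul_pow, I_sq]; ring
  rcases sq_eq_sq_iff_eq_or_eq_neg.mp h with h | h
  · have h_im : w.im = r := by simp [h]
    linarith
  · exact h

/-- Residue formula (6) of the paper: at the end E (where z = a),
2πi Res(dh, E) = π(a⁴ + S₂a² + S₄)/((1 − a²)√((b² − a²)(a² − x²)(y² − a²))), a real number. -/
theorem residue_at_E (a b x y X : ℝ) (wₐ : ℂ)
    (hx0 : 0 < x) (hxa : x < a) (ha1 : a < 1) (hy : 1 < y) (hyb : y < b)
    (hw : wₐ ^ 2 = (((b + a) * (x - a) * (y + a) / ((b - a) * (x + a) * (y - a)) : ℝ) : ℂ))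
    (him : wₐ.im < 0) :
    2 * (π : ℂ) * I * ((a ^ 4 + S₂ b x y X * a ^ 2 + S₄ b x y X : ℝ) : ℂ)
        / (2 * ((a - b : ℝ) : ℂ) * ((a - y : ℝ) : ℂ) * ((a + x : ℝ) : ℂ)
            * ((a ^ 2 - 1 : ℝ) : ℂ) * wₐ)
      = ((π * (a ^ 4 + S₂ b x y X * a ^ 2 + S₄ b x y X)
          / ((1 - a ^ 2) * Real.sqrt ((b ^ 2 - a ^ 2) * (a ^ 2 - x ^ 2) * (y ^ 2 - a ^ 2))) : ℝ)
          : ℂ) := by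
  have hba : 0 < b - a := by linarith
  have hya : 0 < y - a := by linarith
  have hxa' : 0 < x + a := by linarith
  have hq : 0 < (b - a) * (x + a) * (y - a) := by positivity
  have hR : 0 < (b ^ 2 - a ^ 2) * (a ^ 2 - x ^ 2) * (y ^ 2 - a ^ 2) := by
    have h1 : 0 < b ^ 2 - a ^ 2 := by nlinarith
    have h2 : 0 < a ^ 2 - x ^ 2 := by nlinarith
    have h3 : 0 < y ^ 2 - a ^ 2 := by nlinarith
    positivity
  have ha : 1 - a ^ 2 ≠ 0 := by nlinarith
  have hs := Real.sqrt_pos.mpr hR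
  have hss := Real.sq_sqrt hR.le
  set s := √((b ^ 2 - a ^ 2) * (a ^ 2 - x ^ 2) * (y ^ 2 - a ^ 2)) with hs_def
  have hqw : (((b - a) * (x + a) * (y - a) : ℝ) : ℂ) * wₐ = -(I * s) := by
    apply eq_neg_I_mul_of_sq_eq hs
    · rw [mul_pow, hw, ← ofReal_pow, ← ofReal_pow, ← ofReal_mul, ← ofReal_neg, hss]
      congr 1
      field_simp
      ring
    · rw [im_ofReal_mul]
      exact mul_neg_of_pos_of_neg hq him
  have hden : 2 * ((a - b : ℝ) : ℂ) * ((a - y : ℝ) : ℂ) * ((a + x : ℝ) : ℂ)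
      * ((a ^ 2 - 1 : ℝ) : ℂ) * wₐ = 2 * I * (((1 - a ^ 2) * s : ℝ) : ℂ) := by
    push_cast at hqw ⊢
    linear_combination 2 * ((a : ℂ) ^ 2 - 1) * hqw
  have hd : (((1 - a ^ 2) * s : ℝ) : ℂ) ≠ 0 := ofReal_ne_zero.mpr (mul_ne_zero ha hs.ne')
  rw [hden, ofReal_div, ofReal_mul π, div_eq_div_iff (by simp [hd, -ofReal_mul]) hd]
  ring
end
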